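/- Let n ≥ 4 and let L be a Cartan type Lie superalgebra over ℂ, i.e. one of W(n), S(n), S̃(n) (n even), or H(n) (n > 4), with its ℤ-grading. Then L is irreducible: L_{−1} is an irreducible L_0-module under the adjoint action, i.e. the only subspaces of L_{−1} invariant under [L_0, ·] are 0 and L_{−1}. -/

import Mathlib

open scoped BigOperators

noncomputable section

namespace CartanSuper

/-- Coordinates of the exterior algebra `Λ(n)` with respect to the monomial basis
`{x_S : S ⊆ {1,…,n}}`. -/
abbrev Lambda (n : ℕ) := Finset (Fin n) → ℂ

/-- Endomorphism algebra of `Λ(n)`. -/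
abbrev E (n : ℕ) := Module.End ℂ (Lambda n)

variable (n : ℕ)

/-- `(−1)^k`. -/
def msign (k : ℕ) : ℂ := (-1 : ℂ) ^ k

/-- The basis monomial `x_S = x_{i₁}⋯x_{i_k}` (indices in increasing order). -/
def mono (S : Finset (Fin n)) : Lambda n := fun T => if T = S then 1 else 0

/-- Number of inversions between `S` and `T`. -/
def inversions (S T : Finset (Fin n)) : ℕ := ((S ×ˢ T).filter fun p => p.2 < p.1).card

/-- The multiplication of `Λ(n)` in coordinates:
`x_S · x_T = (−1)^{inversions} x_{S ∪ T}` for disjoint `S, T` and `0` otherwise. -/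
def lmulFun (f g : Lambda n) : Lambda n :=
  fun U => ∑ S ∈ U.powerset, msign (inversions n S (U \ S)) * f S * g (U \ S)

/-- Left multiplication by an element of `Λ(n)`, as a linear map `Λ(n) →ₗ End Λ(n)`. -/
def mulOp : Lambda n →ₗ[ℂ] E n where
  toFun f :=
    { toFun := lmulFun n f
      map_add' := by
        intro g h; funext U
        simp [lmulFun, mul_add, Finset.sum_add_distrib]
      map_smul' := by
        intro c g; funext U
        simp only [lmulFun, Pi.smul_apply, smul_eq_mul, RingHom.id_apply, Finset.mul_sum]
        exact Finset.sum_congr rfl (by intros; ring) }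
  map_add' := by
    intro f g; apply LinearMap.ext; intro h; funext U
    show lmulFun n (f + g) h U = lmulFun n f h U + lmulFun n g h U
    simp only [lmulFun]
    rw [← Finset.sum_add_distrib]
    exact Finset.sum_congr rfl (by intros; simp [Pi.add_apply]; ring)
  map_smul' := by
    intro c f; apply LinearMap.ext; intro h; funext U
    show lmulFun n (c • f) h U = (c • lmulFun n f h) U
    simp only [lmulFun, Pi.smul_apply, smul_eq_mul, Finset.mul_sum]
    exact Finset.sum_congr rfl (by intros; ring)

/-- The superderivation `∂_i` of `Λ(n)`, in coordinates. -/
def pd (i : Fin n) : E n where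
  toFun f := fun S =>
    if i ∈ S then 0 else msign (S.filter (· < i)).card * f (insert i S)
  map_add' := by
    intro f g; funext S; by_cases h : i ∈ S <;> simp [h, mul_add]
  map_smul' := by
    intro c f; funext S; by_cases h : i ∈ S <;> simp [h] <;> ring

/-- The parity operator `σ` of `Λ(n)`: `σ(x_S) = (−1)^{|S|} x_S`. -/
def par : E n where
  toFun f := fun S => msign S.card * f S
  map_add' := by intro f g; funext S; simp [mul_add]
  map_smul' := by intro c f; funext S; simp; ring

/-- The super-commutator `[D,F] = D∘F − (−1)^{|D||F|} F∘D`, extended bilinearly to all of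
`End Λ(n)` using the parity operator `σ`
(for homogeneous `D`, `σ∘D∘σ = (−1)^{|D|} D`). -/
def sbFun (D F : E n) : E n :=
  D * F - (2:ℂ)⁻¹ • ((F + par n * F * par n) * D + (F - par n * F * par n) * (par n * D * par n))

/-- The super-commutator as a bilinear map. -/
def sbL : E n →ₗ[ℂ] E n →ₗ[ℂ] E n :=
  LinearMap.mk₂ ℂ (sbFun n)
    (fun D D' F => by
      simp only [sbFun, add_mul, sub_mul, mul_add, mul_sub, smul_mul_assoc, mul_smul_comm,
        smul_add, smul_sub]
      module)
    (fun c D F => by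
      simp only [sbFun, add_mul, sub_mul, mul_add, mul_sub, smul_mul_assoc, mul_smul_comm,
        smul_add, smul_sub]
      module)
    (fun D F F' => by
      simp only [sbFun, add_mul, sub_mul, mul_add, mul_sub, smul_mul_assoc, mul_smul_comm,
        smul_add, smul_sub]
      module)
    (fun c D F => by
      simp only [sbFun, add_mul, sub_mul, mul_add, mul_sub, smul_mul_assoc, mul_smul_comm,
        smul_add, smul_sub]
      module)

/-- Shorthand for the super-commutator. -/
def sb (D F : E n) : E n := sbL n D F

/-- The ℤ₂-homogeneous component of `Λ(n)` of parity `p`. -/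
def lpar (p : ZMod 2) : Submodule ℂ (Lambda n) where
  carrier := {f | ∀ S : Finset (Fin n), (S.card : ZMod 2) ≠ p → f S = 0}
  add_mem' := by intro f g hf hg S hS; simp [Pi.add_apply, hf S hS, hg S hS]
  zero_mem' := by intro S hS; rfl
  smul_mem' := by intro c f hf S hS; simp [Pi.smul_apply, hf S hS]

/-- The ℤ-homogeneous component of `Λ(n)` of degree `m` (zero unless `0 ≤ m ≤ n`). -/
def ldeg (m : ℤ) : Submodule ℂ (Lambda n) where
  carrier := {f | ∀ S : Finset (Fin n), (S.card : ℤ) ≠ m → f S = 0}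
  add_mem' := by intro f g hf hg S hS; simp [Pi.add_apply, hf S hS, hg S hS]
  zero_mem' := by intro S hS; rfl
  smul_mem' := by intro c f hf S hS; simp [Pi.smul_apply, hf S hS]

/-- Endomorphisms of `Λ(n)` that are ℤ₂-homogeneous of parity `p`. -/
def epar (p : ZMod 2) : Submodule ℂ (E n) where
  carrier := {D | ∀ (q : ZMod 2), ∀ f ∈ lpar n q, D f ∈ lpar n (q + p)}
  add_mem' := by
    intro D F hD hF q f hf
    simpa [LinearMap.add_apply] using (lpar n (q + p)).add_mem (hD q f hf) (hF q f hf)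
  zero_mem' := by intro q f hf; simpa using (lpar n (q + p)).zero_mem
  smul_mem' := by
    intro c D hD q f hf
    simpa [LinearMap.smul_apply] using (lpar n (q + p)).smul_mem c (hD q f hf)

/-- Endomorphisms of `Λ(n)` that are ℤ-homogeneous of degree `d`. -/
def edeg (d : ℤ) : Submodule ℂ (E n) where
  carrier := {D | ∀ (m : ℤ), ∀ f ∈ ldeg n m, D f ∈ ldeg n (m + d)}
  add_mem' := by
    intro D F hD hF m f hf
    simpa [LinearMap.add_apply] using (ldeg n (m + d)).add_mem (hD m f hf) (hF m f hf)
  zero_mem' := by intro m f hf; simpa using (ldeg n (m + d)).zero_mem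
  smul_mem' := by
    intro c D hD m f hf
    simpa [LinearMap.smul_apply] using (ldeg n (m + d)).smul_mem c (hD m f hf)

/-- The linear map `(f₁,…,f_n) ↦ ∑ᵢ fᵢ ∂ᵢ`. -/
def Wmap : (Fin n → Lambda n) →ₗ[ℂ] E n where
  toFun F := ∑ i, mulOp n (F i) * pd n i
  map_add' := by
    intro F G
    simp only [Pi.add_apply, map_add, add_mul, Finset.sum_add_distrib]
  map_smul' := by
    intro c F
    simp only [RingHom.id_apply, Pi.smul_apply, map_smul, smul_mul_assoc, Finset.smul_sum]

/-- The divergence `(f₁,…,f_n) ↦ ∑ᵢ ∂ᵢ(fᵢ)`. -/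
def divMap : (Fin n → Lambda n) →ₗ[ℂ] Lambda n where
  toFun F := ∑ i, pd n i (F i)
  map_add' := by
    intro F G
    simp only [Pi.add_apply, map_add, Finset.sum_add_distrib]
  map_smul' := by
    intro c F
    simp only [RingHom.id_apply, Pi.smul_apply, map_smul, Finset.smul_sum]

/-- The Witt type Lie superalgebra `W(n) = {∑ fᵢ∂ᵢ : fᵢ ∈ Λ(n)}`. -/
def Wn : Submodule ℂ (E n) := LinearMap.range (Wmap n)

/-- Divergence-free coefficient tuples. -/
def divFree : Submodule ℂ (Fin n → Lambda n) := LinearMap.ker (divMap n)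

/-- The special type Lie superalgebra `S(n) = {∑ fᵢ∂ᵢ : ∑ ∂ᵢ(fᵢ) = 0}`. -/
def Sn : Submodule ℂ (E n) := (divFree n).map (Wmap n)

/-- The top monomial `ω = x₁x₂⋯x_n`. -/
def omegaTop : Lambda n := mono n Finset.univ

/-- `1 − x₁x₂⋯x_n`. -/
def oneM : Lambda n := mono n ∅ - omegaTop n

/-- Multiplication of every coefficient by `1 − x₁⋯x_n`. -/
def oneMScale : (Fin n → Lambda n) →ₗ[ℂ] (Fin n → Lambda n) :=
  LinearMap.pi fun i => (mulOp n (oneM n)) ∘ₗ LinearMap.proj i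

/-- The Lie superalgebra `S̃(n) = {(1−x₁⋯x_n)∑ fᵢ∂ᵢ : ∑ ∂ᵢ(fᵢ) = 0}` (`n` even). -/
def Stn : Submodule ℂ (E n) := (divFree n).map (Wmap n ∘ₗ oneMScale n)

/-- The conjugate index `i'`. -/
def cidx (i : Fin n) : Fin n :=
  ⟨if i.val < n / 2 then i.val + n / 2 else if i.val < 2 * (n / 2) then i.val - n / 2 else i.val,
   by have := i.isLt; split_ifs <;> omega⟩

/-- The linear map `f ↦ D_H(f) = (−1)^{|f|} ∑ᵢ ∂ᵢ(f)∂_{i'}` (the sign is implemented by the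
parity operator `σ`, so that this is a single linear map agreeing with `D_H` on homogeneous
elements). -/
def DHmap : Lambda n →ₗ[ℂ] E n where
  toFun f := ∑ i, mulOp n (pd n i (par n f)) * pd n (cidx n i)
  map_add' := by
    intro f g
    simp only [map_add, add_mul, Finset.sum_add_distrib]
  map_smul' := by
    intro c f
    simp only [RingHom.id_apply, map_smul, smul_mul_assoc, Finset.smul_sum]

/-- Evaluation of the top coefficient. -/
def evalTop : Lambda n →ₗ[ℂ] ℂ := LinearMap.proj Finset.univ

/-- The Hamiltonian Lie superalgebra `H(n) = {D_H(f) : f ∈ ⊕_{i=0}^{n−1} Λ(n)_i}`. -/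
def Hn : Submodule ℂ (E n) := (LinearMap.ker (evalTop n)).map (DHmap n)

/-- `H̃(n) = {D_H(f) : f ∈ Λ(n)}`. -/
def HtN : Submodule ℂ (E n) := LinearMap.range (DHmap n)

/-- The degree derivation `𝒞 = ∑ᵢ xᵢ∂ᵢ`. -/
def CC : E n := ∑ i, mulOp n (mono n {i}) * pd n i

/-- The span of the diagonal elements `xᵢ∂ᵢ`. -/
def diagSpan : Submodule ℂ (E n) :=
  Submodule.span ℂ (Set.range fun i : Fin n => mulOp n (mono n {i}) * pd n i)

/-- The four families of Cartan type Lie superalgebras. -/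
inductive CT | W | S | St | H
deriving DecidableEq

/-- Validity of the parameter `n` for each family. -/
def CT.valid : CT → ℕ → Prop
  | .W, n => 4 ≤ n
  | .S, n => 4 ≤ n
  | .St, n => 4 ≤ n ∧ Even n
  | .H, n => 4 < n

/-- The Cartan type Lie superalgebra `L` itself. -/
def CT.algebra : CT → (n : ℕ) → Submodule ℂ (E n)
  | .W, n => Wn n
  | .S, n => Sn n
  | .St, n => Stn n
  | .H, n => Hn n

/-- The extended algebra `L'`: `L' = L` for `W(n)` and `S̃(n)`, `L' = S(n) ⊕ ℂ𝒞` for `S(n)`,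
and `L' = H̃(n) ⊕ ℂ𝒞` for `H(n)`. -/
def CT.prime : CT → (n : ℕ) → Submodule ℂ (E n)
  | .W, n => Wn n
  | .S, n => Sn n ⊔ Submodule.span ℂ {CC n}
  | .St, n => Stn n
  | .H, n => HtN n ⊔ Submodule.span ℂ {CC n}

/-- The top degree `ξ_L` of the ℤ-grading. -/
def CT.xi : CT → (n : ℕ) → ℤ
  | .W, n => (n : ℤ) - 1
  | .S, n => (n : ℤ) - 2
  | .St, n => (n : ℤ) - 2
  | .H, n => (n : ℤ) - 3

/-- The ℤ-grading component `L_j = L ∩ W(n)_j`; for `S̃(n)` the component of degree `−1`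
is `span{(1−x₁⋯x_n)∂ᵢ}` instead. -/
def CT.grade (t : CT) (n : ℕ) (j : ℤ) : Submodule ℂ (E n) :=
  match t with
  | .St =>
      if j = -1 then
        Submodule.span ℂ (Set.range fun i : Fin n => mulOp n (oneM n) * pd n i)
      else Stn n ⊓ edeg n j
  | t => t.algebra n ⊓ edeg n j

/-- The ℤ-grading component `L'_j` of the extended algebra `L'`. -/
def CT.grade' (t : CT) (n : ℕ) (j : ℤ) : Submodule ℂ (E n) :=
  match t with
  | .St => CT.grade .St n j
  | t => t.prime n ⊓ edeg n j

/-- The standard Cartan subalgebra `H_L` of `L`: the part of the diagonal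
`span{xᵢ∂ᵢ}` lying in `L`. -/
def CT.cartan (t : CT) (n : ℕ) : Submodule ℂ (E n) := t.algebra n ⊓ diagSpan n

/-- The weight space of `M ⊆ End Λ(n)` of weight `μ ∈ H_L^*` under the adjoint action
of the standard Cartan subalgebra of `L`. -/
def wtsp (t : CT) (n : ℕ) (M : Submodule ℂ (E n)) (μ : Module.Dual ℂ (t.cartan n)) :
    Submodule ℂ (E n) where
  carrier := {x | x ∈ M ∧ ∀ h : t.cartan n, sbL n h x = μ h • x}
  add_mem' := by
    rintro x y ⟨hx, hx'⟩ ⟨hy, hy'⟩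
    exact ⟨M.add_mem hx hy, fun h => by simp [map_add, hx' h, hy' h, smul_add]⟩
  zero_mem' := ⟨M.zero_mem, fun h => by simp⟩
  smul_mem' := by
    rintro c x ⟨hx, hx'⟩
    exact ⟨M.smul_mem c hx, fun h => by simp [map_smul, hx' h, smul_comm c]⟩

/-- The set of roots of `M` with respect to the standard Cartan subalgebra of `L`:
the nonzero weights with nonzero weight space. -/
def CT.roots (t : CT) (n : ℕ) (M : Submodule ℂ (E n)) : Set (Module.Dual ℂ (t.cartan n)) :=
  {ε | ε ≠ 0 ∧ wtsp t n M ε ≠ ⊥}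

/-- The sign `(−1)^p` for `p ∈ ℤ₂`. -/
def sgn (p : ZMod 2) : ℂ := (-1 : ℂ) ^ p.val

/-- `f` is a super-biderivation of `L` of ℤ₂-degree `pf`:
a bilinear map with `f(L_α, L_β) ⊆ L_{α+β+pf}` satisfying
`f([x,y],z) = (−1)^{|x||f|}[x,f(y,z)] + (−1)^{|y||z|}[f(x,z),y]` and
`f(x,[y,z]) = [f(x,y),z] + (−1)^{(|f|+|x|)|y|}[y,f(x,z)]` for homogeneous `x,y,z ∈ L`.
(The bilinear map is given as a bilinear map on the ambient space `End Λ(n)`;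
only its restriction to `L` is relevant.) -/
structure IsSuperBider (L : Submodule ℂ (E n)) (pf : ZMod 2)
    (f : E n →ₗ[ℂ] E n →ₗ[ℂ] E n) : Prop where
  maps : ∀ (α β : ZMod 2), ∀ x ∈ L ⊓ epar n α, ∀ y ∈ L ⊓ epar n β,
    f x y ∈ L ⊓ epar n (α + β + pf)
  eq1 : ∀ (α β γ : ZMod 2), ∀ x ∈ L ⊓ epar n α, ∀ y ∈ L ⊓ epar n β, ∀ z ∈ L ⊓ epar n γ,
    f (sbL n x y) z = sgn (α * pf) • sbL n x (f y z) + sgn (β * γ) • sbL n (f x z) y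
  eq2 : ∀ (α β γ : ZMod 2), ∀ x ∈ L ⊓ epar n α, ∀ y ∈ L ⊓ epar n β, ∀ z ∈ L ⊓ epar n γ,
    f x (sbL n y z) = sbL n (f x y) z + sgn ((pf + α) * β) • sbL n y (f x z)

/-- `D` is a superderivation of `L` of ℤ₂-degree `p`:
`D(L_α) ⊆ L_{α+p}` and `D([x,y]) = [D(x),y] + (−1)^{|D||x|}[x,D(y)]` for homogeneous
`x, y ∈ L`. (Given as a linear map on the ambient space `End Λ(n)`.) -/
structure IsSuperDer (L : Submodule ℂ (E n)) (p : ZMod 2)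
    (D : E n →ₗ[ℂ] E n) : Prop where
  maps : ∀ (α : ZMod 2), ∀ x ∈ L ⊓ epar n α, D x ∈ L ⊓ epar n (α + p)
  leib : ∀ (α β : ZMod 2), ∀ x ∈ L ⊓ epar n α, ∀ y ∈ L ⊓ epar n β,
    D (sbL n x y) = sbL n (D x) y + sgn (p * α) • sbL n x (D y)

/-- `f ∈ BDer(L)_ε`: the super-biderivation `f` has weight `ε ∈ H_L^*`, i.e.
`f(L_η, L_ζ) ⊆ L_{ε+η+ζ}` for all weights `η, ζ`. -/
def CT.HasWeight (t : CT) (n : ℕ) (f : E n →ₗ[ℂ] E n →ₗ[ℂ] E n)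
    (ε : Module.Dual ℂ (t.cartan n)) : Prop :=
  ∀ (η ζ : Module.Dual ℂ (t.cartan n)),
    ∀ x ∈ wtsp t n (t.algebra n) η, ∀ y ∈ wtsp t n (t.algebra n) ζ,
      f x y ∈ wtsp t n (t.algebra n) (ε + η + ζ)

/-- `f ∈ BDer(L)_i`: the super-biderivation `f` has ℤ-degree `i`, i.e.
`f(L_j, L_k) ⊆ L_{i+j+k}` for all `j, k ∈ ℤ`. -/
def CT.HasDeg (t : CT) (n : ℕ) (f : E n →ₗ[ℂ] E n →ₗ[ℂ] E n) (i : ℤ) : Prop :=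
  ∀ (j k : ℤ), ∀ x ∈ t.grade n j, ∀ y ∈ t.grade n k, f x y ∈ t.grade n (i + j + k)

/-- Number of elements of `S` below `i`. -/
def cnt (i : Fin n) (S : Finset (Fin n)) : ℕ := (S.filter (· < i)).card

/-- Left multiplication by `x_i`. -/
def X (i : Fin n) : E n := mulOp n (mono n {i})

/-- The element `x_i ∂_j`. -/
def e (i j : Fin n) : E n := X n i * pd n j

theorem msign_succ (k : ℕ) : msign (k + 1) = - msign k := by
  simp [msign, pow_succ]

theorem msign_sq (k : ℕ) : msign k * msign k = 1 := by
  simp [msign, ← mul_pow]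

theorem cnt_insert (i j : Fin n) (S : Finset (Fin n)) (h : j ∉ S) :
    msign (cnt n i (insert j S)) = (if j < i then -1 else 1) * msign (cnt n i S) := by
  unfold cnt
  rw [Finset.filter_insert]
  split_ifs with hj
  · rw [Finset.card_insert_of_notMem (by simp [h]), msign_succ]; ring
  · ring

theorem cnt_erase (i j : Fin n) (S : Finset (Fin n)) (h : j ∈ S) :
    msign (cnt n i (S.erase j)) = (if j < i then -1 else 1) * msign (cnt n i S) := by
  conv_rhs => rw [← Finset.insert_erase h, cnt_insert n i j _ (Finset.notMem_erase j S)]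
  split_ifs <;> ring

theorem inversions_singleton (i : Fin n) (T : Finset (Fin n)) :
    inversions n {i} T = cnt n i T := by
  unfold inversions cnt
  rw [Finset.singleton_product, Finset.filter_map, Finset.card_map]
  rfl

theorem mulOp_apply (f g : Lambda n) (U : Finset (Fin n)) :
    mulOp n f g U = ∑ S ∈ U.powerset, msign (inversions n S (U \ S)) * f S * g (U \ S) := rfl

theorem mulOp_mono_apply (T : Finset (Fin n)) (g : Lambda n) (U : Finset (Fin n)) :
    mulOp n (mono n T) g U =
      if T ⊆ U then msign (inversions n T (U \ T)) * g (U \ T) else 0 := by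
  rw [mulOp_apply]
  split_ifs with h
  · rw [Finset.sum_eq_single T]
    · simp [mono]
    · intro S _ hS; simp [mono, hS]
    · intro hT; simp [h] at hT
  · apply Finset.sum_eq_zero
    intro S hS
    have : S ≠ T := by rintro rfl; exact h (Finset.mem_powerset.1 hS)
    simp [mono, this]

theorem X_apply (i : Fin n) (g : Lambda n) (U : Finset (Fin n)) :
    X n i g U = if i ∈ U then msign (cnt n i U) * g (U.erase i) else 0 := by
  unfold X
  rw [mulOp_mono_apply]
  simp only [Finset.singleton_subset_iff]
  split_ifs with h
  · rw [inversions_singleton, Finset.sdiff_singleton_eq_erase, cnt_erase n i i U h]; simp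
  · rfl

theorem pd_apply (i : Fin n) (f : Lambda n) (S : Finset (Fin n)) :
    pd n i f S = if i ∈ S then 0 else msign (cnt n i S) * f (insert i S) := rfl

theorem par_apply (f : Lambda n) (S : Finset (Fin n)) :
    par n f S = msign S.card * f S := rfl

theorem pd_pd (i j : Fin n) : pd n i * pd n j = - (pd n j * pd n i) := by
  apply LinearMap.ext; intro f; funext S
  simp only [Module.End.mul_apply, LinearMap.neg_apply, Pi.neg_apply, pd_apply, Finset.mem_insert]
  by_cases hij : i = j
  · subst hij; simp
  have hji : ¬ j = i := fun h => hij h.symm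
  by_cases hi : i ∈ S
  · simp [hi]
  by_cases hj : j ∈ S
  · simp [hj]
  simp only [hi, hj, hij, hji, or_self, if_false]
  rw [cnt_insert n j i S hi, cnt_insert n i j S hj, Finset.insert_comm i j]
  rcases lt_or_gt_of_ne hij with h | h
  · simp [h, not_lt.2 h.le]; ring
  · simp [h, not_lt.2 h.le]; ring

theorem pd_X (i k : Fin n) : pd n k * X n i = (if i = k then 1 else 0) - X n i * pd n k := by
  apply LinearMap.ext; intro f; funext S
  simp only [Module.End.mul_apply, LinearMap.sub_apply, Pi.sub_apply, pd_apply, X_apply,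
    Finset.mem_insert, Finset.mem_erase]
  by_cases hik : i = k
  · subst hik
    by_cases hi : i ∈ S
    · simp only [hi, if_true]
      rw [cnt_erase n i i S hi, Finset.insert_erase hi]
      simp [← mul_assoc, msign_sq]
    · simp only [hi, if_false, if_true]
      rw [cnt_insert n i i S hi, Finset.erase_insert hi]
      simp [← mul_assoc, msign_sq]
  have hki : ¬ k = i := fun h => hik h.symm
  by_cases hi : i ∈ S
  · by_cases hk : k ∈ S
    · simp [hk, hki, hik]
    simp only [hi, hk, hik, hki, if_false, or_true, if_true, and_false]
    rw [cnt_insert n i k S hk, cnt_erase n k i S hi, Finset.erase_insert_of_ne hki]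
    rcases lt_or_gt_of_ne hik with h | h
    · simp [h, not_lt.2 h.le]; ring
    · simp [h, not_lt.2 h.le]; ring
  · simp [hi, hik]

theorem par_par : par n * par n = 1 := by
  apply LinearMap.ext; intro f; funext S
  simp [Module.End.mul_apply, par_apply, ← mul_assoc, msign_sq]

theorem par_pd (i : Fin n) : par n * pd n i = - (pd n i * par n) := by
  apply LinearMap.ext; intro f; funext S
  simp only [Module.End.mul_apply, LinearMap.neg_apply, Pi.neg_apply, pd_apply, par_apply]
  split_ifs with h
  · simp
  · rw [Finset.card_insert_of_notMem h, msign_succ]; ring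

theorem par_X (i : Fin n) : par n * X n i = - (X n i * par n) := by
  apply LinearMap.ext; intro f; funext S
  simp only [Module.End.mul_apply, LinearMap.neg_apply, Pi.neg_apply, X_apply, par_apply]
  split_ifs with h
  · rw [← Finset.card_erase_add_one h, msign_succ]; ring
  · simp

theorem E_neg_mul (A B : E n) : -A * B = -(A * B) := LinearMap.ext fun _ => rfl

theorem E_mul_neg (A B : E n) : A * -B = -(A * B) :=
  LinearMap.ext fun f => A.map_neg (B f)

theorem par_e (i j : Fin n) : par n * e n i j = e n i j * par n := by
  unfold e
  rw [← mul_assoc, par_X, E_neg_mul, mul_assoc, par_pd, E_mul_neg, neg_neg, mul_assoc]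

theorem sb_e (Om : E n) (i j k : Fin n) (h1 : e n i j * Om = Om * e n i j)
    (h2 : par n * Om = Om * par n) :
    sbL n (e n i j) (Om * pd n k) = if i = k then - (Om * pd n j) else 0 := by
  have hF : par n * (Om * pd n k) * par n = - (Om * pd n k) := by
    rw [← mul_assoc, h2, mul_assoc Om, par_pd, E_mul_neg, E_neg_mul, mul_assoc, mul_assoc, par_par,
      mul_one]
  have hD : par n * e n i j * par n = e n i j := by
    rw [par_e, mul_assoc, par_par, mul_one]
  have h3 : sbL n (e n i j) (Om * pd n k) = Om * (e n i j * pd n k - pd n k * e n i j) := by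
    show sbFun n _ _ = _
    rw [sbFun, hF, hD, mul_sub, ← mul_assoc, h1, mul_assoc, ← mul_assoc Om]
    simp only [add_neg_cancel, zero_mul, sub_neg_eq_add, zero_add, ← two_smul ℂ (Om * pd n k),
      smul_mul_assoc, smul_smul]
    norm_num [mul_assoc]
  rw [h3]
  have h4 : e n i j * pd n k - pd n k * e n i j = if i = k then - pd n j else 0 := by
    unfold e
    rw [← mul_assoc (pd n k), pd_X, mul_assoc, pd_pd n j k, sub_mul, mul_assoc, E_mul_neg]
    split_ifs <;> simp
    abel
  rw [h4]; split_ifs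
  · exact E_mul_neg n _ _
  · simp

theorem mono_empty_mulOp : mulOp n (mono n ∅) = 1 := by
  apply LinearMap.ext; intro f; funext S
  rw [mulOp_mono_apply]
  simp [inversions, msign]

theorem omega_apply (g : Lambda n) (U : Finset (Fin n)) :
    mulOp n (omegaTop n) g U = if U = Finset.univ then g ∅ else 0 := by
  rw [omegaTop, mulOp_mono_apply]
  simp only [Finset.univ_subset_iff]
  split_ifs with h
  · subst h; simp [inversions, msign]
  · rfl

theorem e_omega (i j : Fin n) (h : i ≠ j) : e n i j * mulOp n (omegaTop n) = 0 := by
  apply LinearMap.ext; intro f; funext S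
  simp only [e, Module.End.mul_apply, X_apply, pd_apply, omega_apply]
  have : insert j (S.erase i) ≠ Finset.univ := by
    intro h'
    have := Finset.mem_univ i
    rw [← h'] at this
    simp [h] at this
  simp [this]

theorem omega_X (i : Fin n) : mulOp n (omegaTop n) * X n i = 0 := by
  apply LinearMap.ext; intro f; funext S
  simp [Module.End.mul_apply, X_apply, omega_apply]

theorem mulOp_oneM : mulOp n (oneM n) = 1 - mulOp n (omegaTop n) := by
  rw [oneM, map_sub, mono_empty_mulOp]

theorem e_oneM (i j : Fin n) (h : i ≠ j) :
    e n i j * mulOp n (oneM n) = mulOp n (oneM n) * e n i j := by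
  rw [mulOp_oneM, mul_sub, sub_mul, e_omega n i j h]
  rw [e, ← mul_assoc (mulOp n (omegaTop n)), omega_X]; simp

theorem par_oneM (hn : Even n) : par n * mulOp n (oneM n) = mulOp n (oneM n) * par n := by
  rw [mulOp_oneM, mul_sub, sub_mul]
  congr 1
  apply LinearMap.ext; intro f; funext S
  simp only [Module.End.mul_apply, omega_apply, par_apply]
  split_ifs with h
  · subst h; simp [msign, hn.neg_one_pow]
  · simp

theorem pd_mono_single (i j : Fin n) :
    pd n i (mono n {j}) = if i = j then mono n ∅ else 0 := by
  funext S
  rw [pd_apply]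
  by_cases hS : S = ∅
  · subst hS
    by_cases h : i = j
    · subst h; simp [mono, cnt, msign]
    · simp [mono, h]
  · have : i ∉ S → insert i S ≠ {j} := by
      intro hi h
      apply hS
      have h2 := congrArg Finset.card h
      rw [Finset.card_insert_of_notMem hi] at h2
      simpa using h2
    split_ifs with h1 h2 h2
    · simp [mono, hS]
    · rfl
    · simp [mono, hS, this h1]
    · simp [mono, this h1]

theorem mulOp_one (f : Lambda n) : mulOp n f (mono n ∅) = f := by
  funext U
  rw [mulOp_apply, Finset.sum_eq_single U]
  · simp [inversions, msign, mono]
  · intro S hS hne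
    have : U \ S ≠ ∅ := by
      intro h
      exact hne (Finset.Subset.antisymm (Finset.mem_powerset.1 hS) (Finset.sdiff_eq_empty_iff_subset.1 h))
    simp [mono, this]
  · simp

theorem e_edeg (i j : Fin n) : e n i j ∈ edeg n 0 := by
  intro m f hf S hS
  simp only [e, Module.End.mul_apply, X_apply, pd_apply]
  split_ifs with h1 h2
  · simp
  · rw [hf]
    · simp
    · rw [Finset.card_insert_of_notMem h2, Finset.card_erase_add_one h1]
      simpa using hS
  · rfl

theorem W_minus (D : E n) (hD : D ∈ Wn n) (hd : D ∈ edeg n (-1)) :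
    D ∈ Submodule.span ℂ (Set.range (pd n)) := by
  obtain ⟨F, rfl⟩ := hD
  have key : ∀ j, Wmap n F (mono n {j}) = F j := by
    intro j
    show (∑ i, mulOp n (F i) * pd n i) (mono n {j}) = F j
    rw [LinearMap.sum_apply, Finset.sum_eq_single j]
    · rw [Module.End.mul_apply, pd_mono_single, if_pos rfl, mulOp_one]
    · intro b _ hb
      rw [Module.End.mul_apply, pd_mono_single, if_neg hb, map_zero]
    · simp
  have hF : ∀ j, F j = F j ∅ • mono n ∅ := by
    intro j
    funext S
    by_cases hS : S = ∅
    · subst hS; simp [mono]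
    · have h1 : mono n {j} ∈ ldeg n 1 := by
        intro T hT
        have : T ≠ {j} := by rintro rfl; simp at hT
        simp [mono, this]
      have h2 := hd 1 _ h1
      rw [key] at h2
      rw [h2 S (by simpa using hS)]
      simp [mono, hS]
  show (∑ i, mulOp n (F i) * pd n i) ∈ _
  apply Submodule.sum_mem
  intro i _
  rw [hF i, map_smul, mono_empty_mulOp, smul_mul_assoc, one_mul]
  exact Submodule.smul_mem _ _ (Submodule.subset_span ⟨i, rfl⟩)

theorem Sn_le : Sn n ≤ Wn n := by
  rintro _ ⟨F, _, rfl⟩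
  exact ⟨F, rfl⟩

theorem cidx_cidx (i : Fin n) : cidx n (cidx n i) = i := by
  apply Fin.ext
  have := i.isLt
  simp only [cidx]
  split_ifs <;> omega

theorem Hn_le : Hn n ≤ Wn n := by
  rintro _ ⟨f, _, rfl⟩
  refine ⟨fun i => pd n (cidx n i) (par n f), ?_⟩
  show (∑ i, mulOp n _ * pd n i) = ∑ i, mulOp n (pd n i (par n f)) * pd n (cidx n i)
  refine Fintype.sum_bijective (cidx n) (Function.Involutive.bijective (cidx_cidx n)) _ _ ?_
  intro i
  rw [cidx_cidx]

theorem Wmap_single (j : Fin n) (f : Lambda n) :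
    Wmap n (Pi.single j f) = mulOp n f * pd n j := by
  show (∑ i, mulOp n _ * pd n i) = _
  rw [Finset.sum_eq_single j]
  · simp
  · intro b _ hb; simp [hb]
  · simp

theorem single_divFree (i j : Fin n) (h : i ≠ j) :
    (Pi.single j (mono n {i}) : Fin n → Lambda n) ∈ divFree n := by
  show (∑ k, pd n k _) = 0
  apply Finset.sum_eq_zero
  intro k _
  by_cases hk : k = j
  · subst hk; rw [Pi.single_eq_same, pd_mono_single, if_neg h.symm]
  · simp [hk]

theorem e_Sn (i j : Fin n) (h : i ≠ j) : e n i j ∈ Sn n :=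
  ⟨_, single_divFree n i j h, Wmap_single n j _⟩

theorem e_Stn (i j : Fin n) (h : i ≠ j) : e n i j ∈ Stn n := by
  refine ⟨_, single_divFree n i j h, ?_⟩
  have h1 : mulOp n (oneM n) (mono n {i}) = mono n {i} := by
    have := LinearMap.congr_fun (omega_X n i) (mono n ∅)
    rw [Module.End.mul_apply, X, mulOp_one] at this
    rw [mulOp_oneM, LinearMap.sub_apply, this]; simp
  have h2 : oneMScale n (Pi.single j (mono n {i})) = Pi.single j (mono n {i}) := by
    funext k
    show mulOp n (oneM n) _ = _
    by_cases hk : k = j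
    · subst hk; rw [LinearMap.proj_apply, Pi.single_eq_same, h1]
    · simp [hk]
  rw [LinearMap.comp_apply, h2]
  exact Wmap_single n j _

/-- The orthogonal generators. -/
def M (i j : Fin n) : E n := e n j (cidx n i) - e n i (cidx n j)

theorem pd_pair (i j k : Fin n) (h : i < j) :
    pd n k (par n (mono n {i, j})) =
      (if k = i then mono n {j} else 0) - (if k = j then mono n {i} else 0) := by
  have hij : i ≠ j := h.ne
  have hp : par n (mono n {i, j}) = mono n {i, j} := by
    funext S
    rw [par_apply, mono]
    split_ifs with hS
    · subst hS; rw [Finset.card_pair hij]; simp [msign]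
    · simp
  have hm : mono n {i, j} = X n i (mono n {j}) := by
    funext S
    rw [X_apply]
    by_cases hS : S = {i, j}
    · subst hS
      have h1 : ({i, j} : Finset (Fin n)).erase i = {j} := by
        rw [Finset.erase_insert]; simpa using hij
      have h2 : cnt n i {i, j} = 0 := by
        simp [cnt, Finset.filter_insert, Finset.filter_singleton, not_lt.2 h.le]
      simp [mono, h1, h2, msign]
    · split_ifs with hi
      · have : S.erase i ≠ {j} := by
          intro h'; apply hS; rw [← Finset.insert_erase hi, h']
        simp [mono, this, hS]
      · simp [mono, hS]
  rw [hp, hm, ← Module.End.mul_apply, pd_X, LinearMap.sub_apply, Module.End.mul_apply,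
    pd_mono_single]
  congr 1
  · by_cases hk : k = i
    · subst hk; simp
    · simp [hk, Ne.symm hk]
  · split_ifs
    · exact mulOp_one n _
    · simp

theorem M_Hn_lt (hn : 4 < n) (i j : Fin n) (h : i < j) : M n i j ∈ Hn n := by
  refine ⟨mono n {i, j}, ?_, ?_⟩
  · show mono n {i, j} Finset.univ = 0
    have : (Finset.univ : Finset (Fin n)) ≠ {i, j} := by
      intro h'
      have := congrArg Finset.card h'
      rw [Finset.card_pair h.ne] at this
      simp at this; omega
    simp [mono, this]
  · show (∑ k, mulOp n (pd n k (par n (mono n {i, j}))) * pd n (cidx n k)) = _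
    simp only [pd_pair n i j _ h, map_sub, sub_mul, Finset.sum_sub_distrib]
    unfold M e X
    congr 1
    · rw [Finset.sum_eq_single i]
      · simp
      · intro b _ hb; simp [hb]
      · simp
    · rw [Finset.sum_eq_single j]
      · simp
      · intro b _ hb; simp [hb]
      · simp

theorem M_Hn (hn : 4 < n) (i j : Fin n) (h : i ≠ j) : M n i j ∈ Hn n := by
  rcases lt_or_gt_of_ne h with h | h
  · exact M_Hn_lt n hn i j h
  · have : M n i j = - M n j i := by unfold M; abel
    rw [this]; exact Submodule.neg_mem _ (M_Hn_lt n hn j i h)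

/-- Abstract irreducibility argument, general linear case. -/
theorem irr_gl {A : Type*} [AddCommGroup A] [Module ℂ A] (hn : 2 ≤ n) (v : Fin n → A)
    (T : Fin n → Fin n → A →ₗ[ℂ] A)
    (hT : ∀ i j k, i ≠ j → T i j (v k) = if i = k then - v j else 0)
    (V G : Submodule ℂ A) (hG : G ≤ Submodule.span ℂ (Set.range v)) (hV : V ≤ G)
    (hinv : ∀ i j, i ≠ j → ∀ x ∈ V, T i j x ∈ V) : V = ⊥ ∨ V = G := by
  by_cases h0 : V = ⊥
  · exact Or.inl h0
  right
  obtain ⟨x, hx, hx0⟩ := Submodule.exists_mem_ne_zero_of_ne_bot h0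
  obtain ⟨c, rfl⟩ := (Submodule.mem_span_range_iff_exists_fun ℂ).1 (hG (hV hx))
  obtain ⟨i, hi⟩ : ∃ i, c i ≠ 0 := by
    by_contra hc
    push Not at hc
    exact hx0 (by simp [hc])
  have h1 : ∀ j, i ≠ j → v j ∈ V := by
    intro j hj
    have := hinv i j hj _ hx
    rw [map_sum, Finset.sum_eq_single i] at this
    · rw [map_smul, hT i j i hj, if_pos rfl, smul_neg, Submodule.neg_mem_iff] at this
      exact (Submodule.smul_mem_iff V hi).1 this
    · intro b _ hb
      rw [map_smul, hT i j b hj, if_neg hb.symm, smul_zero]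
    · simp
  have h2 : ∀ j, v j ∈ V := by
    intro j
    by_cases hj : i = j
    · subst hj
      haveI : Nontrivial (Fin n) := Fin.nontrivial_iff_two_le.2 hn
      obtain ⟨k, hk⟩ := exists_ne i
      have := hinv k i hk _ (h1 k hk.symm)
      rw [hT k i k hk, if_pos rfl, Submodule.neg_mem_iff] at this
      exact this
    · exact h1 j hj
  refine le_antisymm hV (hG.trans (Submodule.span_le.2 ?_))
  rintro _ ⟨j, rfl⟩
  exact h2 j

theorem exists_avoid (hn : 4 < n) (a b : Fin n) : ∃ c : Fin n, c ≠ a ∧ c ≠ b := by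
  have : ∃ c, c ∉ ({a, b} : Finset (Fin n)) := by
    by_contra h
    push Not at h
    have h1 := Finset.card_le_two (a := a) (b := b)
    rw [Finset.eq_univ_iff_forall.2 h] at h1
    simp at h1; omega
  obtain ⟨c, hc⟩ := this
  simp at hc
  exact ⟨c, hc.1, hc.2⟩

/-- Abstract irreducibility argument, orthogonal case. -/
theorem irr_so {A : Type*} [AddCommGroup A] [Module ℂ A] (hn : 4 < n) (v : Fin n → A)
    (T : Fin n → Fin n → A →ₗ[ℂ] A) (s : Fin n → Fin n) (hs : ∀ i, s (s i) = i)
    (hT : ∀ i j k, T i j (v k) = (if i = k then v (s j) else 0) - (if j = k then v (s i) else 0))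
    (V G : Submodule ℂ A) (hG : G ≤ Submodule.span ℂ (Set.range v)) (hV : V ≤ G)
    (hinv : ∀ i j, i ≠ j → ∀ x ∈ V, T i j x ∈ V) : V = ⊥ ∨ V = G := by
  by_cases h0 : V = ⊥
  · exact Or.inl h0
  right
  obtain ⟨x, hx, hx0⟩ := Submodule.exists_mem_ne_zero_of_ne_bot h0
  obtain ⟨c, rfl⟩ := (Submodule.mem_span_range_iff_exists_fun ℂ).1 (hG (hV hx))
  obtain ⟨i, hi⟩ : ∃ i, c i ≠ 0 := by
    by_contra hc
    push Not at hc
    exact hx0 (by simp [hc])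
  have hinj : ∀ a b, s a = s b → a = b := fun a b h => by rw [← hs a, h, hs]
  have h1 : ∀ j, i ≠ j → c i • v (s j) - c j • v (s i) ∈ V := by
    intro j hj
    have := hinv i j hj _ hx
    simpa [map_sum, map_smul, hT, smul_sub, Finset.sum_sub_distrib] using this
  have h2 : ∀ b, b ≠ s i → v (s b) ∈ V := by
    intro b hb
    obtain ⟨j, hj1, hj2⟩ := exists_avoid n hn i (s b)
    have hbj : s j ≠ b := by rintro rfl; exact hj2 (hs j).symm
    have := hinv (s j) b hbj _ (h1 j hj1.symm)
    have hji : s j ≠ s i := fun h => hj1 (hinj _ _ h)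
    rw [map_sub, map_smul, map_smul, hT, hT, if_pos rfl, if_neg hbj.symm, if_neg hji, if_neg hb]
      at this
    simp only [sub_zero, smul_zero] at this
    exact (Submodule.smul_mem_iff V hi).1 this
  have h3 : ∀ j, j ≠ i → v j ∈ V := by
    intro j hj
    have := h2 (s j) (fun h => hj (hinj _ _ h))
    rwa [hs] at this
  have h4 : ∀ j, v j ∈ V := by
    intro j
    by_cases hj : j = i
    · subst hj
      obtain ⟨k, hk1, hk2⟩ := exists_avoid n hn j (s j)
      have := hinv k (s j) hk2 _ (h3 k hk1)
      rw [hT, if_pos rfl, if_neg hk2.symm, hs, sub_zero] at this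
      exact this
    · exact h3 j hj
  refine le_antisymm hV (hG.trans (Submodule.span_le.2 ?_))
  rintro _ ⟨j, rfl⟩
  exact h4 j

theorem sb_pd (i j k : Fin n) :
    sbL n (e n i j) (pd n k) = if i = k then - pd n j else 0 := by
  have := sb_e n 1 i j k (by simp) (by simp)
  simpa using this

/-- A Cartan type Lie superalgebra `L` over `ℂ` is irreducible:
`L_{−1}` is an irreducible `L_0`-module under the adjoint action, i.e. the only subspaces
of `L_{−1}` invariant under `[L_0, ·]` are `0` and `L_{−1}`. -/
theorem minus_one_irreducible (n : ℕ) (t : CT) (ht : t.valid n)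
    (V : Submodule ℂ (E n)) (hV : V ≤ t.grade n (-1))
    (hinv : ∀ x ∈ t.grade n 0, ∀ v ∈ V, sbL n x v ∈ V) :
    V = ⊥ ∨ V = t.grade n (-1) := by
  cases t with
  | W =>
    have hn : 4 ≤ n := ht
    refine irr_gl n (by omega) (pd n) (fun i j => sbL n (e n i j))
      (fun i j k _ => sb_pd n i j k) V _ (fun D hD => W_minus n D hD.1 hD.2) hV ?_
    intro i j h x hx
    exact hinv _ ⟨Sn_le n (e_Sn n i j h), e_edeg n i j⟩ x hx
  | S =>
    have hn : 4 ≤ n := ht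
    refine irr_gl n (by omega) (pd n) (fun i j => sbL n (e n i j))
      (fun i j k _ => sb_pd n i j k) V _ (fun D hD => W_minus n D (Sn_le n hD.1) hD.2) hV ?_
    intro i j h x hx
    exact hinv _ ⟨e_Sn n i j h, e_edeg n i j⟩ x hx
  | St =>
    have hn : 4 ≤ n := ht.1
    refine irr_gl n (by omega) (fun i => mulOp n (oneM n) * pd n i) (fun i j => sbL n (e n i j))
      (fun i j k h => sb_e n _ i j k (e_oneM n i j h) (par_oneM n ht.2)) V _ ?_ hV ?_
    · simp [CT.grade]
    · intro i j h x hx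
      refine hinv _ ?_ x hx
      have : CT.grade CT.St n 0 = Stn n ⊓ edeg n 0 := by simp [CT.grade]
      rw [this]
      exact ⟨e_Stn n i j h, e_edeg n i j⟩
  | H =>
    have hn : 4 < n := ht
    refine irr_so n hn (pd n) (fun i j => sbL n (M n i j)) (cidx n) (cidx_cidx n)
      ?_ V _ (fun D hD => W_minus n D (Hn_le n hD.1) hD.2) hV ?_
    · intro i j k
      simp only [M, map_sub, LinearMap.sub_apply, sb_pd]
      split_ifs <;> simp
      abel
    · intro i j h x hx
      exact hinv _ ⟨M_Hn n hn i j h,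
        Submodule.sub_mem _ (e_edeg n _ _) (e_edeg n _ _)⟩ x hx

end CartanSuper
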